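/- arXiv:2007.15033 — 7 statements merged into one kernel-verified Lean document; each statement's English description precedes it below -/
import Mathlib

section
/- Let 0 < s < 1 and ρ_s, ρ₁ > 0, and set σ := (ρ₁ + s·ρ_s) / (ρ₁·ρ_s·s·log(1/s)). Then the function u(x) = 1 + σ·ρ₁·log|x| is harmonic on the open annulus {x ∈ ℝ² : s < |x| < 1} and satisfies the Steklov boundary conditions ⟨x, ∇u(x)⟩ = σ·ρ₁·u(x) for |x| = 1 and −(1/s)·⟨x, ∇u(x)⟩ = σ·ρ_s·u(x) for |x| = s; i.e., (σ, u) is a Steklov eigenpair on the annulus A_s with densities ρ_s, ρ₁ whose eigenfunction is rotationally symmetric. -/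
/-!
Away from the origin `∇ (c + k log |x|) = k x / |x|²`, so `⟨x, ∇u⟩ = k` on every circle, and the two
pure second derivatives are `k (y² - x²) / |x|⁴` and `k (x² - y²) / |x|⁴`, which cancel. With
`k = σ ρ₁` the condition on `|x| = 1`, where `u = 1`, is immediate; on `|x| = s` it reads
`-k / s = σ ρₛ (1 + k log s)`, and the value of `σ` is the one for which this holds.
Since `u` is symmetric in the two coordinates, the `y`-derivatives come from the one-variable
lemmas for the `x`-derivatives.
-/

/-- Partial derivative of `u : ℝ × ℝ → ℝ` in the first coordinate. -/
noncomputable def pdx (u : ℝ × ℝ → ℝ) (p : ℝ × ℝ) : ℝ :=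
  deriv (fun t => u (t, p.2)) p.1

/-- Partial derivative of `u : ℝ × ℝ → ℝ` in the second coordinate. -/
noncomputable def pdy (u : ℝ × ℝ → ℝ) (p : ℝ × ℝ) : ℝ :=
  deriv (fun t => u (p.1, t)) p.2

/-- The Laplacian `Δu = ∂²u/∂x² + ∂²u/∂y²` of `u : ℝ × ℝ → ℝ`. -/
noncomputable def lap (u : ℝ × ℝ → ℝ) (p : ℝ × ℝ) : ℝ :=
  deriv (fun t => pdx u (t, p.2)) p.1 + deriv (fun t => pdy u (p.1, t)) p.2

/-- The Euclidean norm `|x|` of a point of `ℝ²`. -/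
noncomputable def nrm (p : ℝ × ℝ) : ℝ := Real.sqrt (p.1 ^ 2 + p.2 ^ 2)

theorem hasDerivAt_log_nrm (c k a b : ℝ) (h : 0 < a ^ 2 + b ^ 2) :
    HasDerivAt (fun t : ℝ => c + k * Real.log (Real.sqrt (t ^ 2 + b ^ 2)))
      (k * (a / (a ^ 2 + b ^ 2))) a := by
  have h1 : HasDerivAt (fun t : ℝ => t ^ 2 + b ^ 2) (2 * a) a := by
    simpa using (hasDerivAt_pow 2 a).add_const (b ^ 2)
  have h2 := (((h1.log h.ne').div_const 2).const_mul k).const_add c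
  have h3 : (fun t : ℝ => c + k * Real.log (Real.sqrt (t ^ 2 + b ^ 2)))
      = fun t : ℝ => c + k * (Real.log (t ^ 2 + b ^ 2) / 2) := by
    funext t
    rw [Real.log_sqrt (by positivity)]
  rw [h3]
  refine h2.congr_deriv ?_
  field_simp

theorem hasDerivAt_div_sq_add_sq (k a b : ℝ) (h : 0 < a ^ 2 + b ^ 2) :
    HasDerivAt (fun t : ℝ => k * (t / (t ^ 2 + b ^ 2)))
      (k * ((b ^ 2 - a ^ 2) / (a ^ 2 + b ^ 2) ^ 2)) a := by
  have h1 : HasDerivAt (fun t : ℝ => t ^ 2 + b ^ 2) (2 * a) a := by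
    simpa using (hasDerivAt_pow 2 a).add_const (b ^ 2)
  have h2 := ((hasDerivAt_id a).fun_div h1 h.ne').const_mul k
  refine h2.congr_deriv ?_
  simp only [id]
  ring

theorem sq_add_sq_eq_nrm_sq (p : ℝ × ℝ) : p.1 ^ 2 + p.2 ^ 2 = nrm p ^ 2 :=
  (Real.sq_sqrt (by positivity)).symm

theorem pdx_radial_log {u : ℝ × ℝ → ℝ} {c k : ℝ} (hu : ∀ p, u p = c + k * Real.log (nrm p))
    (p : ℝ × ℝ) (h : 0 < p.1 ^ 2 + p.2 ^ 2) :
    pdx u p = k * (p.1 / (p.1 ^ 2 + p.2 ^ 2)) := by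
  simp only [pdx, hu, nrm]
  exact (hasDerivAt_log_nrm c k p.1 p.2 h).deriv

theorem pdy_radial_log {u : ℝ × ℝ → ℝ} {c k : ℝ} (hu : ∀ p, u p = c + k * Real.log (nrm p))
    (p : ℝ × ℝ) (h : 0 < p.1 ^ 2 + p.2 ^ 2) :
    pdy u p = k * (p.2 / (p.2 ^ 2 + p.1 ^ 2)) := by
  simp only [pdy, hu, nrm, add_comm (p.1 ^ 2)]
  exact (hasDerivAt_log_nrm c k p.2 p.1 (by linarith)).deriv

theorem lap_radial_log {u : ℝ × ℝ → ℝ} {c k : ℝ} (hu : ∀ p, u p = c + k * Real.log (nrm p))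
    (p : ℝ × ℝ) (h : 0 < p.1 ^ 2 + p.2 ^ 2) : lap u p = 0 := by
  -- The gradient formula holds off the origin, an open set, hence near `p` and can be differentiated.
  have hx : (fun t => pdx u (t, p.2)) =ᶠ[nhds p.1]
      fun t => k * (t / (t ^ 2 + p.2 ^ 2)) := by
    have hc : Continuous fun t : ℝ => t ^ 2 + p.2 ^ 2 := by fun_prop
    filter_upwards [hc.continuousAt.eventually_const_lt h] with t ht
    exact pdx_radial_log hu (t, p.2) ht
  have hy : (fun t => pdy u (p.1, t)) =ᶠ[nhds p.2]
      fun t => k * (t / (t ^ 2 + p.1 ^ 2)) := by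
    have hc : Continuous fun t : ℝ => p.1 ^ 2 + t ^ 2 := by fun_prop
    filter_upwards [hc.continuousAt.eventually_const_lt h] with t ht
    exact pdy_radial_log hu (p.1, t) ht
  rw [lap, hx.deriv_eq, hy.deriv_eq, (hasDerivAt_div_sq_add_sq k p.1 p.2 h).deriv,
    (hasDerivAt_div_sq_add_sq k p.2 p.1 (by linarith)).deriv]
  ring

theorem radial_deriv_log {u : ℝ × ℝ → ℝ} {c k : ℝ} (hu : ∀ p, u p = c + k * Real.log (nrm p))
    (p : ℝ × ℝ) (h : 0 < p.1 ^ 2 + p.2 ^ 2) : p.1 * pdx u p + p.2 * pdy u p = k := by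
  rw [pdx_radial_log hu p h, pdy_radial_log hu p h, add_comm (p.2 ^ 2)]
  field_simp

/-- for `0 < s < 1`, `ρ_s, ρ₁ > 0` and
`σ = (ρ₁ + s ρ_s)/(ρ₁ ρ_s s log(1/s))`, the function `u(x) = 1 + σ ρ₁ log |x|`
is harmonic on the open annulus `{s < |x| < 1}` and satisfies the Steklov
boundary conditions `⟨x, ∇u(x)⟩ = σ ρ₁ u(x)` on `|x| = 1` and
`−(1/s)⟨x, ∇u(x)⟩ = σ ρ_s u(x)` on `|x| = s`. -/
theorem steklov_radial_eigenpair_annulus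
    (s ρs ρ1 : ℝ) (hs : 0 < s) (hs1 : s < 1) (hρs : 0 < ρs) (hρ1 : 0 < ρ1)
    (σ : ℝ) (hσ : σ = (ρ1 + s * ρs) / (ρ1 * ρs * s * Real.log (1 / s)))
    (u : ℝ × ℝ → ℝ) (hu : ∀ p, u p = 1 + σ * ρ1 * Real.log (nrm p)) :
    (∀ p : ℝ × ℝ, s < nrm p → nrm p < 1 → lap u p = 0) ∧
    (∀ p : ℝ × ℝ, nrm p = 1 → p.1 * pdx u p + p.2 * pdy u p = σ * ρ1 * u p) ∧
    (∀ p : ℝ × ℝ, nrm p = s →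
      -(1 / s) * (p.1 * pdx u p + p.2 * pdy u p) = σ * ρs * u p) := by
  have hpos : ∀ p : ℝ × ℝ, 0 < nrm p → 0 < p.1 ^ 2 + p.2 ^ 2 := fun p hp => by
    rw [sq_add_sq_eq_nrm_sq]
    positivity
  refine ⟨fun p hp _ => lap_radial_log hu p (hpos p (hs.trans hp)), fun p hp => ?_, fun p hp => ?_⟩
  · rw [radial_deriv_log hu p (hpos p (by rw [hp]; exact one_pos)), hu, hp, Real.log_one]
    ring
  · rw [radial_deriv_log hu p (hpos p (by rw [hp]; exact hs)), hu, hp]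
    have hlog : Real.log s ≠ 0 := (Real.log_neg hs hs1).ne
    have hkey : σ * ρ1 * Real.log s = -(ρ1 + s * ρs) / (ρs * s) := by
      rw [hσ, one_div, Real.log_inv]
      field_simp
    rw [hkey]
    field_simp
    ring
end

section
/- Let 0 < s < 1, ρ₁, ρ_s > 0, and let k be a positive integer. Define the 2×2 real matrices A_k = [[k, −k], [−k·s^{k−1}, k·s^{−k−1}]] and B_k = [[ρ₁, ρ₁], [ρ_s·s^k, ρ_s·s^{−k}]]. Then B_k is invertible, and a real number σ satisfies det(A_k − σ·B_k) = 0 if and only if σ = σ_{k,+} or σ = σ_{k,−}, where σ_{k,±} = (k/(2·ρ₁·s·ρ_s))·coth(k·log(1/s))·[ρ₁ + s·ρ_s ± √((ρ₁ + s·ρ_s)² − 4·ρ₁·s·ρ_s·tanh²(k·log(1/s)))]. Moreover the quantity under the square root is nonnegative and both σ_{k,+} and σ_{k,−} are strictly positive. -/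
/-!
Put `t = k log (1/s) > 0`, `S = sinh t`, `C = cosh t`, `b = ρ₁ + s ρ_s`, `c = ρ₁ s ρ_s`.
Since `s^{-k} - s^k = 2 S` and `s^{-k} + s^k = 2 C`, expanding the determinant gives
`s · det (A_k - σ B_k) = 2 (c S σ² - k b C σ + k² S)` and `det B_k = 2 ρ₁ ρ_s S > 0`.
The numbers `σ_{k,±}` have sum `k b C / (c S)` and product `k² / c`, so the quadratic factors
as `2 c S (σ - σ_{k,+}) (σ - σ_{k,-})`. The discriminant is nonnegative because `tanh² t < 1` and
`4 c ≤ b²`; its square root is smaller than `b` because `tanh t > 0`, whence both roots are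
positive.
-/

/-- for `0 < s < 1`, `ρ₁, ρ_s > 0` and a positive integer `k`, the
matrix `B_k = [[ρ₁, ρ₁], [ρ_s s^k, ρ_s s^{−k}]]` is invertible, and
`det(A_k − σ B_k) = 0` (with `A_k = [[k, −k], [−k s^{k−1}, k s^{−k−1}]]`) holds
if and only if `σ = σ_{k,+}` or `σ = σ_{k,−}`, where
`σ_{k,±} = (k/(2ρ₁ s ρ_s)) coth(k log(1/s)) [ρ₁ + s ρ_s ±
√((ρ₁ + s ρ_s)² − 4 ρ₁ s ρ_s tanh²(k log(1/s)))]`.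
Moreover the discriminant is nonnegative and both roots are positive. -/
theorem steklov_annulus_matrix_eigenvalues
    (s ρ1 ρs : ℝ) (hs : 0 < s) (hs1 : s < 1) (hρ1 : 0 < ρ1) (hρs : 0 < ρs)
    (k : ℕ) (hk : 0 < k)
    (Ak Bk : Matrix (Fin 2) (Fin 2) ℝ)
    (hA : Ak = !![(k : ℝ), -(k : ℝ);
                  -(k : ℝ) * s ^ ((k : ℤ) - 1), (k : ℝ) * s ^ (-(k : ℤ) - 1)])
    (hB : Bk = !![ρ1, ρ1; ρs * s ^ (k : ℤ), ρs * s ^ (-(k : ℤ))])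
    (σp σm : ℝ)
    (hσp : σp = ((k : ℝ) / (2 * ρ1 * s * ρs)) *
      (Real.cosh ((k : ℝ) * Real.log (1 / s)) / Real.sinh ((k : ℝ) * Real.log (1 / s))) *
      (ρ1 + s * ρs + Real.sqrt ((ρ1 + s * ρs) ^ 2
        - 4 * ρ1 * s * ρs * Real.tanh ((k : ℝ) * Real.log (1 / s)) ^ 2)))
    (hσm : σm = ((k : ℝ) / (2 * ρ1 * s * ρs)) *
      (Real.cosh ((k : ℝ) * Real.log (1 / s)) / Real.sinh ((k : ℝ) * Real.log (1 / s))) *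
      (ρ1 + s * ρs - Real.sqrt ((ρ1 + s * ρs) ^ 2
        - 4 * ρ1 * s * ρs * Real.tanh ((k : ℝ) * Real.log (1 / s)) ^ 2))) :
    IsUnit Bk ∧
    (∀ σ : ℝ, (Ak - σ • Bk).det = 0 ↔ σ = σp ∨ σ = σm) ∧
    0 ≤ (ρ1 + s * ρs) ^ 2 - 4 * ρ1 * s * ρs * Real.tanh ((k : ℝ) * Real.log (1 / s)) ^ 2 ∧
    0 < σp ∧ 0 < σm := by
  set t : ℝ := (k : ℝ) * Real.log (1 / s) with ht
  have hk' : (0 : ℝ) < k := by exact_mod_cast hk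
  have htpos : 0 < t := mul_pos hk' (Real.log_pos (by rw [lt_div_iff₀ hs]; linarith))
  have hq : s ^ (k : ℤ) = Real.exp (-t) := by
    rw [ht, one_div, Real.log_inv, mul_neg, neg_neg, Real.exp_nat_mul, Real.exp_log hs,
      zpow_natCast]
  have hp : s ^ (-(k : ℤ)) = Real.exp t := by
    rw [zpow_neg, hq, Real.exp_neg, inv_inv]
  have hq' : s ^ (k : ℤ) = Real.cosh t - Real.sinh t := by rw [hq, Real.cosh_sub_sinh]
  have hp' : s ^ (-(k : ℤ)) = Real.cosh t + Real.sinh t := by rw [hp, Real.cosh_add_sinh]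
  have hS : 0 < Real.sinh t := Real.sinh_pos_iff.mpr htpos
  have hC : 0 < Real.cosh t := Real.cosh_pos t
  have hT : Real.tanh t = Real.sinh t / Real.cosh t := Real.tanh_eq_sinh_div_cosh t
  have hT0 : 0 < Real.tanh t := by rw [hT]; positivity
  have hT1 : Real.tanh t ^ 2 ≤ 1 := by
    rw [hT, div_pow, div_le_one (by positivity)]
    linarith [Real.cosh_sq t]
  have hc : 0 < ρ1 * s * ρs := by positivity
  have hD : 0 ≤ (ρ1 + s * ρs) ^ 2 - 4 * ρ1 * s * ρs * Real.tanh t ^ 2 := by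
    nlinarith [sq_nonneg (ρ1 - s * ρs), mul_nonneg hc.le (sub_nonneg.mpr hT1)]
  have hRsq := Real.sq_sqrt hD
  have hR0 := Real.sqrt_nonneg ((ρ1 + s * ρs) ^ 2 - 4 * ρ1 * s * ρs * Real.tanh t ^ 2)
  have hRlt : Real.sqrt ((ρ1 + s * ρs) ^ 2 - 4 * ρ1 * s * ρs * Real.tanh t ^ 2)
      < ρ1 + s * ρs := by
    rw [Real.sqrt_lt' (by positivity)]
    have : 0 < ρ1 * s * ρs * Real.tanh t ^ 2 := by positivity
    linarith
  set R : ℝ := Real.sqrt ((ρ1 + s * ρs) ^ 2 - 4 * ρ1 * s * ρs * Real.tanh t ^ 2)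
  have hsum : ρ1 * s * ρs * Real.sinh t * (σp + σm)
      = k * (ρ1 + s * ρs) * Real.cosh t := by
    rw [hσp, hσm]
    field_simp
    ring
  have hprod : ρ1 * s * ρs * (σp * σm) = (k : ℝ) ^ 2 := by
    have h1 : σp * σm = ((k : ℝ) / (2 * ρ1 * s * ρs) * (Real.cosh t / Real.sinh t)) ^ 2
        * ((ρ1 + s * ρs) ^ 2 - R ^ 2) := by
      rw [hσp, hσm]
      ring
    rw [h1, hRsq, hT]
    field_simp
    ring
  refine ⟨?_, fun σ => ?_, hD, ?_, ?_⟩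
  · rw [Matrix.isUnit_iff_isUnit_det, isUnit_iff_ne_zero, hB, Matrix.det_fin_two_of, hq', hp']
    have : 0 < ρ1 * ρs * Real.sinh t := by positivity
    intro h
    linarith
  · have hdet : s * (Ak - σ • Bk).det
        = 2 * (ρ1 * s * ρs * Real.sinh t) * ((σ - σp) * (σ - σm)) := by
      have hquad : s * (Ak - σ • Bk).det = 2 * (ρ1 * s * ρs * Real.sinh t * σ ^ 2
          - k * (ρ1 + s * ρs) * Real.cosh t * σ + (k : ℝ) ^ 2 * Real.sinh t) := by
        rw [hA, hB, Matrix.det_fin_two]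
        simp only [Matrix.sub_apply, Matrix.smul_apply, Matrix.of_apply, Matrix.cons_val',
          Matrix.cons_val_zero, Matrix.cons_val_one, Matrix.cons_val_fin_one, smul_eq_mul]
        rw [zpow_sub_one₀ hs.ne', zpow_sub_one₀ hs.ne', hq', hp']
        field_simp
        ring
      rw [hquad]
      linear_combination 2 * σ * hsum - 2 * Real.sinh t * hprod
    have hfac : 2 * (ρ1 * s * ρs * Real.sinh t) ≠ 0 := by positivity
    rw [← mul_eq_zero_iff_left hs.ne', hdet, mul_eq_zero_iff_left hfac, mul_eq_zero,
      sub_eq_zero, sub_eq_zero]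
  · rw [hσp]
    positivity
  · rw [hσm]
    have := sub_pos.mpr hRlt
    positivity
end

section
/- For every positive integer j there exists a unique s ∈ (0,1) satisfying the transcendental equation (1 + s^j)/(1 − s^j) = (j/2)·log(1/s). Equivalently, there is a unique s ∈ (0,1) at which the two length-normalized Steklov eigenvalue expressions 4πj·(1 − s^j)/(1 + s^j) and 8π/log(1/s) are equal. -/
/-!
On `(0,1)` the function `(1 + s^j)/(1 - s^j)` is strictly increasing and `(j/2) log (1/s)` is
strictly decreasing, so they agree at most once. Existence is the intermediate value theorem for
the cleared form `1 + s^j + (1 - s^j) (j/2) log s`, which is negative at `s = exp (-4/j)`, where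
`s^j = exp (-4)`, and equals `2` at `s = 1`. The eigenvalue equation follows because it is the
same equation after clearing the nonzero denominators.
-/

lemma existsUnique_transcendental (j : ℕ) (hj : 0 < j) :
    ∃! s : ℝ, s ∈ Set.Ioo (0 : ℝ) 1 ∧
      (1 + s ^ j) / (1 - s ^ j) = ((j : ℝ) / 2) * Real.log (1 / s) := by
  have hj' : (0 : ℝ) < j := by exact_mod_cast hj
  -- Of two points of `(0,1)`, the larger has the larger left side and the smaller right side.
  have key : ∀ a b : ℝ, 0 < a → a < b → b < 1 →
      (1 + a ^ j) / (1 - a ^ j) = ((j : ℝ) / 2) * Real.log (1 / a) →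
      (1 + b ^ j) / (1 - b ^ j) = ((j : ℝ) / 2) * Real.log (1 / b) → False := by
    intro a b ha hab hb h1 h2
    have hp : a ^ j < b ^ j := pow_lt_pow_left₀ hab ha.le hj.ne'
    have hb1 : b ^ j < 1 := pow_lt_one₀ (ha.trans hab).le hb hj.ne'
    have hl : Real.log a < Real.log b := Real.log_lt_log ha hab
    have h3 : (1 + a ^ j) / (1 - a ^ j) < (1 + b ^ j) / (1 - b ^ j) := by
      rw [div_lt_div_iff₀ (by linarith) (by linarith)]
      nlinarith
    rw [h1, h2, one_div, one_div, Real.log_inv, Real.log_inv] at h3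
    nlinarith
  have hc1 : Real.exp (-4 / (j : ℝ)) < 1 :=
    Real.exp_lt_one_iff.mpr (div_neg_of_neg_of_pos (by norm_num) hj')
  have hc0 := Real.exp_pos (-4 / (j : ℝ))
  have hcj : Real.exp (-4 / (j : ℝ)) ^ j = Real.exp (-4) := by
    rw [← Real.exp_nat_mul]
    congr 1
    field_simp
  have h4 : Real.exp (-4) < 1 / 3 := by
    rw [Real.exp_neg, ← one_div]
    apply one_div_lt_one_div_of_lt (by norm_num)
    have := Real.add_one_lt_exp (x := 4) (by norm_num)
    linarith
  have hcont : ContinuousOn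
      (fun s : ℝ => 1 + s ^ j + (1 - s ^ j) * ((j : ℝ) / 2 * Real.log s))
      (Set.Icc (Real.exp (-4 / (j : ℝ))) 1) := by
    have hlog : ContinuousOn Real.log (Set.Icc (Real.exp (-4 / (j : ℝ))) 1) :=
      Real.continuousOn_log.mono fun x hx => (hc0.trans_le hx.1).ne'
    fun_prop
  obtain ⟨s, hs, hs0⟩ := intermediate_value_Ioo hc1.le hcont (show (0 : ℝ) ∈ Set.Ioo _ _ by
    constructor
    · simp only [hcj, Real.log_exp]
      have : (j : ℝ) / 2 * (-4 / (j : ℝ)) = -2 := by field_simp; norm_num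
      rw [this]
      linarith
    · norm_num)
  have hsj : s ^ j < 1 := pow_lt_one₀ (hc0.trans hs.1).le hs.2 hj.ne'
  refine ⟨s, ⟨⟨hc0.trans hs.1, hs.2⟩, ?_⟩, ?_⟩
  · rw [div_eq_iff (by linarith), one_div, Real.log_inv]
    simp only at hs0
    linarith
  · rintro t ⟨⟨ht0, ht1⟩, ht⟩
    have hs' : (1 + s ^ j) / (1 - s ^ j) = ((j : ℝ) / 2) * Real.log (1 / s) := by
      rw [div_eq_iff (by linarith), one_div, Real.log_inv]
      simp only at hs0
      linarith
    rcases lt_trichotomy t s with h | h | h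
    · exact (key t s ht0 h hs.2 ht hs').elim
    · exact h
    · exact (key s t (hc0.trans hs.1) h ht1 hs' ht).elim

lemma eigenvalues_eq_iff (j : ℕ) (hj : 0 < j) (s : ℝ) (hs : s ∈ Set.Ioo (0 : ℝ) 1) :
    4 * Real.pi * (j : ℝ) * (1 - s ^ j) / (1 + s ^ j) = 8 * Real.pi / Real.log (1 / s) ↔
      (1 + s ^ j) / (1 - s ^ j) = ((j : ℝ) / 2) * Real.log (1 / s) := by
  have hsj : s ^ j < 1 := pow_lt_one₀ hs.1.le hs.2 hj.ne'
  have hp : 0 < s ^ j := pow_pos hs.1 j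
  have hL : 0 < Real.log (1 / s) := Real.log_pos (one_lt_one_div hs.1 hs.2)
  rw [div_eq_div_iff (by linarith) hL.ne', div_eq_iff (by linarith)]
  constructor
  · intro h
    apply mul_left_cancel₀ (mul_pos (by norm_num : (0 : ℝ) < 8) Real.pi_pos).ne'
    linarith
  · intro h
    rw [h]
    ring

/-- for every positive integer `j` there exists a unique
`s ∈ (0,1)` with `(1 + s^j)/(1 − s^j) = (j/2) log(1/s)`; equivalently there is
a unique `s ∈ (0,1)` at which the two length-normalized Steklov eigenvalue
expressions `4πj(1 − s^j)/(1 + s^j)` and `8π/log(1/s)` agree. -/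
theorem exists_unique_critical_annulus_parameter (j : ℕ) (hj : 0 < j) :
    (∃! s : ℝ, s ∈ Set.Ioo (0 : ℝ) 1 ∧
      (1 + s ^ j) / (1 - s ^ j) = ((j : ℝ) / 2) * Real.log (1 / s)) ∧
    (∃! s : ℝ, s ∈ Set.Ioo (0 : ℝ) 1 ∧
      4 * Real.pi * (j : ℝ) * (1 - s ^ j) / (1 + s ^ j) = 8 * Real.pi / Real.log (1 / s)) := by
  refine ⟨existsUnique_transcendental j hj, ?_⟩
  obtain ⟨s, ⟨hs, he⟩, hu⟩ := existsUnique_transcendental j hj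
  exact ⟨s, ⟨hs, (eigenvalues_eq_iff j hj s hs).mpr he⟩,
    fun t ht => hu t ⟨ht.1, (eigenvalues_eq_iff j hj t ht.1).mp ht.2⟩⟩
end

section
/- Let 0 < s < 1, set β = log(1/√s) and N = √(cosh²(β) + β²), and define U : (0,∞) × ℝ → ℝ³ by U(r,θ) = ( (cosh(log(r/√s))/N)·cos θ, (cosh(log(r/√s))/N)·sin θ, log(r/√s)/N ). Then for all r > 0 and θ ∈ ℝ: (i) |∂_r U(r,θ)|² = r^{−2}·|∂_θ U(r,θ)|²; (ii) ∂_r U(r,θ) · ∂_θ U(r,θ) = 0 (isothermal coordinates); and (iii) |U(1,θ)| = |U(s,θ)| = 1, i.e., U maps both boundary circles of the annulus {s ≤ r ≤ 1} into the unit sphere S² ⊂ ℝ³. -/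
/-!
In the logarithmic coordinate `ρ = log (r / √s)` the map is the standard conformal parametrization
of the catenoid, `(cosh ρ cos θ, cosh ρ sin θ, ρ)`, scaled by `1 / N`, and `∂_r = r⁻¹ ∂_ρ`. Hence
(i) amounts to `sinh² ρ + 1 = cosh² ρ`, and (ii) to the orthogonality of the radial and angular
directions in the plane. The boundary circles `r = 1` and `r = s` correspond to `ρ = β` and
`ρ = -β`, where `cosh² ρ + ρ² = N²` since the left side is even in `ρ`.
-/

/-- with `β = log(1/√s)`, `N = √(cosh²β + β²)` and
`U(r,θ) = ((cosh(log(r/√s))/N) cos θ, (cosh(log(r/√s))/N) sin θ, log(r/√s)/N)`,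
for all `r > 0` and `θ ∈ ℝ` one has the isothermal-coordinate conditions
`|∂_r U|² = r^{−2} |∂_θ U|²` and `∂_r U · ∂_θ U = 0`, and `U` maps both
boundary circles `r = 1` and `r = s` into the unit sphere `S²`. -/
theorem catenoid_map_isothermal
    (s : ℝ) (hs : 0 < s) (hs1 : s < 1)
    (β N : ℝ) (hβ : β = Real.log (1 / Real.sqrt s))
    (hN : N = Real.sqrt (Real.cosh β ^ 2 + β ^ 2))
    (U1 U2 U3 : ℝ → ℝ → ℝ)
    (hU1 : ∀ r θ : ℝ, U1 r θ = (Real.cosh (Real.log (r / Real.sqrt s)) / N) * Real.cos θ)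
    (hU2 : ∀ r θ : ℝ, U2 r θ = (Real.cosh (Real.log (r / Real.sqrt s)) / N) * Real.sin θ)
    (hU3 : ∀ r θ : ℝ, U3 r θ = Real.log (r / Real.sqrt s) / N) :
    ∀ r θ : ℝ, 0 < r →
      ((deriv (fun t => U1 t θ) r) ^ 2 + (deriv (fun t => U2 t θ) r) ^ 2
          + (deriv (fun t => U3 t θ) r) ^ 2
        = r⁻¹ ^ 2 * ((deriv (fun t => U1 r t) θ) ^ 2 + (deriv (fun t => U2 r t) θ) ^ 2
          + (deriv (fun t => U3 r t) θ) ^ 2)) ∧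
      (deriv (fun t => U1 t θ) r * deriv (fun t => U1 r t) θ
        + deriv (fun t => U2 t θ) r * deriv (fun t => U2 r t) θ
        + deriv (fun t => U3 t θ) r * deriv (fun t => U3 r t) θ = 0) ∧
      (U1 1 θ ^ 2 + U2 1 θ ^ 2 + U3 1 θ ^ 2 = 1 ∧
       U1 s θ ^ 2 + U2 s θ ^ 2 + U3 s θ ^ 2 = 1) := by
  intro r θ hr
  have hq : 0 < Real.sqrt s := Real.sqrt_pos.mpr hs
  have hNsq : N ^ 2 = Real.cosh β ^ 2 + β ^ 2 := by
    rw [hN, Real.sq_sqrt (by positivity)]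
  have hN0 : N ≠ 0 := by
    have h : 0 < N := by
      rw [hN]
      have := Real.cosh_pos β
      positivity
    exact h.ne'
  have hlog : HasDerivAt (fun t => Real.log (t / Real.sqrt s)) r⁻¹ r := by
    have h := ((hasDerivAt_id' r).div_const (Real.sqrt s)).log (div_pos hr hq).ne'
    convert h using 1
    field_simp
  have hcosh := hlog.cosh.div_const N
  have d1 := (hcosh.mul_const (Real.cos θ)).deriv
  have d2 := (hcosh.mul_const (Real.sin θ)).deriv
  have d3 := (hlog.div_const N).deriv
  have e1 := ((Real.hasDerivAt_cos θ).const_mul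
    (Real.cosh (Real.log (r / Real.sqrt s)) / N)).deriv
  have e2 := ((Real.hasDerivAt_sin θ).const_mul
    (Real.cosh (Real.log (r / Real.sqrt s)) / N)).deriv
  have hs_log : Real.log (s / Real.sqrt s) = -β := by
    rw [Real.div_sqrt, hβ, one_div, Real.log_inv, neg_neg]
  have hsc := Real.sin_sq_add_cos_sq θ
  simp only [hU1, hU2, hU3, d1, d2, d3, e1, e2, deriv_const, hs_log, ← hβ, Real.cosh_neg]
  refine ⟨?_, by ring, ?_, ?_⟩
  · have hch := Real.cosh_sq (Real.log (r / Real.sqrt s))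
    generalize Real.log (r / Real.sqrt s) = ρ at hch ⊢
    linear_combination (r⁻¹ ^ 2 / N ^ 2) * ((Real.sinh ρ ^ 2 - Real.cosh ρ ^ 2) * hsc - hch)
  · field_simp
    linear_combination Real.cosh β ^ 2 * hsc - hNsq
  · field_simp
    linear_combination Real.cosh β ^ 2 * hsc - hNsq
end

section
/- Let 0 < s < 1 and let ρ and δρ be continuous functions defined on a neighborhood of ∂Ω_s. Let σ : ℝ → ℝ be differentiable at 0 and let u : ℝ × ℝ² → ℝ be smooth on ℝ × V for some open set V containing the closure of Ω_s. Assume that for every ε ∈ ℝ the pair (σ(ε), u(ε, ·)) satisfies the weighted Steklov problem in weak form with density ρ_ε = ρ + ε·δρ, i.e., ∫_{Ω_s} ∇u(ε,·)·∇v dx = σ(ε)·∫_{∂Ω_s} ρ_ε·u(ε,·)·v for every smooth v : ℝ² → ℝ, and that the normalization ∫_{∂Ω_s} ρ_ε·u(ε,·)² = 1 holds for every ε. Then σ'(0) = −σ(0)·∫_{∂Ω_s} u(0,·)²·δρ. -/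
/-!
Write `B_ε(f, g) = ∫_{∂Ω_s} ρ_ε f g` and let `a` be the Dirichlet form on `Ω_s`. Testing the problem
at `ε` with `u(0,·)` and the problem at `0` with `u(ε,·)`, and using the symmetry of `a`, gives
`σ(ε) B_ε(u_ε, u_0) = a(u_ε, u_0) = σ(0) B_0(u_ε, u_0)`. Since `ρ_ε = ρ + ε δρ`, this says
`(σ(ε) - σ(0)) B_ε(u_ε, u_0) = -σ(0) ε ∫_{∂Ω_s} δρ u_ε u_0`.
Dividing by `ε` and letting `ε → 0` yields the formula, because `B_ε(u_ε, u_0) → B_0(u_0, u_0) = 1`.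
Only continuity of the boundary integrals in `ε` enters (`continuous_bInt`); nothing is
differentiated under an integral sign.

Test functions have to be smooth on all of `ℝ²`, so `u(ε,·)`, which is smooth only near the closed
annulus, is first replaced by a globally smooth function that agrees with it on the closed annulus
(`exists_smooth_extension`).
-/


open MeasureTheory

/-- The open annulus `Ω_s = {x ∈ ℝ² : s < |x| < 1}`. -/
noncomputable def ann (s : ℝ) : Set (ℝ × ℝ) :=
  {p | s < Real.sqrt (p.1 ^ 2 + p.2 ^ 2) ∧ Real.sqrt (p.1 ^ 2 + p.2 ^ 2) < 1}

/-- The boundary `∂Ω_s`, the union of the two circles `|x| = s` and `|x| = 1`. -/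
noncomputable def annBdry (s : ℝ) : Set (ℝ × ℝ) :=
  {p | Real.sqrt (p.1 ^ 2 + p.2 ^ 2) = s ∨ Real.sqrt (p.1 ^ 2 + p.2 ^ 2) = 1}

/-- The boundary integral `∫_{∂Ω_s} g` with respect to arc length on the two
boundary circles. -/
noncomputable def bInt (s : ℝ) (g : ℝ × ℝ → ℝ) : ℝ :=
  (∫ θ in (0 : ℝ)..(2 * Real.pi), g (Real.cos θ, Real.sin θ)) +
    s * ∫ θ in (0 : ℝ)..(2 * Real.pi), g (s * Real.cos θ, s * Real.sin θ)

theorem isOpen_ann (s : ℝ) : IsOpen (ann s) := by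
  have hc : Continuous fun p : ℝ × ℝ => Real.sqrt (p.1 ^ 2 + p.2 ^ 2) := by fun_prop
  exact (isOpen_lt continuous_const hc).inter (isOpen_lt hc continuous_const)

theorem sqrt_polar {r : ℝ} (hr : 0 ≤ r) (θ : ℝ) :
    Real.sqrt ((r * Real.cos θ) ^ 2 + (r * Real.sin θ) ^ 2) = r := by
  have h : (r * Real.cos θ) ^ 2 + (r * Real.sin θ) ^ 2 = r ^ 2 := by
    linear_combination r ^ 2 * Real.sin_sq_add_cos_sq θ
  rw [h, Real.sqrt_sq hr]

theorem polar_mem_closure {s : ℝ} (hs : 0 < s) (hs1 : s < 1) {r : ℝ} (hr : r ∈ Set.Icc s 1)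
    (θ : ℝ) : (r * Real.cos θ, r * Real.sin θ) ∈ closure (ann s) := by
  have hc : Continuous fun r : ℝ => (r * Real.cos θ, r * Real.sin θ) := by fun_prop
  rw [← closure_Ioo hs1.ne] at hr
  refine map_mem_closure (f := fun r : ℝ => (r * Real.cos θ, r * Real.sin θ)) hc hr fun t ht => ?_
  have h := sqrt_polar (hs.le.trans ht.1.le) θ
  simp only [ann, Set.mem_ofPred_eq, h]
  exact ht

theorem inner_mem {s : ℝ} (hs : 0 < s) (hs1 : s < 1) (θ : ℝ) :
    (s * Real.cos θ, s * Real.sin θ) ∈ annBdry s ∩ closure (ann s) :=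
  ⟨Or.inl (sqrt_polar hs.le θ), polar_mem_closure hs hs1 ⟨le_rfl, hs1.le⟩ θ⟩

theorem outer_mem {s : ℝ} (hs : 0 < s) (hs1 : s < 1) (θ : ℝ) :
    (Real.cos θ, Real.sin θ) ∈ annBdry s ∩ closure (ann s) := by
  have h1 := sqrt_polar zero_le_one θ
  have h2 := polar_mem_closure hs hs1 ⟨hs1.le, le_rfl⟩ θ
  simp only [one_mul] at h1 h2
  exact ⟨Or.inr h1, h2⟩

theorem bInt_congr {s : ℝ} (hs : 0 < s) (hs1 : s < 1) {f g : ℝ × ℝ → ℝ}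
    (h : Set.EqOn f g (closure (ann s))) : bInt s f = bInt s g := by
  unfold bInt
  simp only [h (inner_mem hs hs1 _).2, h (outer_mem hs hs1 _).2]

theorem continuous_bInt {s : ℝ} (hs : 0 < s) (hs1 : s < 1) {F : ℝ → ℝ × ℝ → ℝ}
    (hF : ContinuousOn (fun q : ℝ × (ℝ × ℝ) => F q.1 q.2)
      (Set.univ ×ˢ (annBdry s ∩ closure (ann s)))) :
    Continuous fun ε => bInt s (F ε) := by
  unfold bInt
  refine Continuous.add ?_ (continuous_const.mul ?_)
  · refine intervalIntegral.continuous_parametric_intervalIntegral_of_continuous' ?_ _ _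
    exact hF.comp_continuous (f := fun p : ℝ × ℝ => (p.1, (Real.cos p.2, Real.sin p.2)))
      (by fun_prop) fun p => ⟨trivial, outer_mem hs hs1 p.2⟩
  · refine intervalIntegral.continuous_parametric_intervalIntegral_of_continuous' ?_ _ _
    exact hF.comp_continuous (f := fun p : ℝ × ℝ => (p.1, (s * Real.cos p.2, s * Real.sin p.2)))
      (by fun_prop) fun p => ⟨trivial, inner_mem hs hs1 p.2⟩

theorem bInt_add_mul {s : ℝ} (hs : 0 < s) (hs1 : s < 1) {f g : ℝ × ℝ → ℝ}
    (hf : ContinuousOn f (annBdry s ∩ closure (ann s)))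
    (hg : ContinuousOn g (annBdry s ∩ closure (ann s))) (c : ℝ) :
    bInt s (fun q => f q + c * g q) = bInt s f + c * bInt s g := by
  have outer {h : ℝ × ℝ → ℝ} (hh : ContinuousOn h (annBdry s ∩ closure (ann s))) :
      IntervalIntegrable (fun θ => h (Real.cos θ, Real.sin θ)) volume 0 (2 * Real.pi) :=
    (hh.comp_continuous (f := fun θ => (Real.cos θ, Real.sin θ)) (by fun_prop)
      (outer_mem hs hs1)).intervalIntegrable _ _
  have inner {h : ℝ × ℝ → ℝ} (hh : ContinuousOn h (annBdry s ∩ closure (ann s))) :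
      IntervalIntegrable (fun θ => h (s * Real.cos θ, s * Real.sin θ)) volume 0 (2 * Real.pi) :=
    (hh.comp_continuous (f := fun θ => (s * Real.cos θ, s * Real.sin θ)) (by fun_prop)
      (inner_mem hs hs1)).intervalIntegrable _ _
  unfold bInt
  rw [intervalIntegral.integral_add (outer hf) ((outer hg).const_mul c),
    intervalIntegral.integral_add (inner hf) ((inner hg).const_mul c),
    intervalIntegral.integral_const_mul, intervalIntegral.integral_const_mul]
  ring

/-- A function that is smooth near a closed set agrees on that set with a globally smooth function,
namely its product with a cutoff function. -/
theorem exists_smooth_extension {K V : Set (ℝ × ℝ)} (hK : IsClosed K) (hV : IsOpen V)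
    (hKV : K ⊆ V) {f : ℝ × ℝ → ℝ} (hf : ContDiffOn ℝ (⊤ : ℕ∞) f V) :
    ∃ v : ℝ × ℝ → ℝ, ContDiff ℝ (⊤ : ℕ∞) v ∧ Set.EqOn v f K := by
  obtain ⟨χ, h0, h1, -⟩ := exists_contMDiffMap_zero_one_nhds_of_isClosed
    (modelWithCornersSelf ℝ (ℝ × ℝ)) (n := (⊤ : ℕ∞)) hV.isClosed_compl hK
    (Set.disjoint_compl_left_iff_subset.mpr hKV)
  have hχ : ContDiff ℝ (⊤ : ℕ∞) χ := contMDiff_iff_contDiff.mp χ.contMDiff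
  refine ⟨fun x => χ x * f x, contDiff_iff_contDiffAt.mpr fun x => ?_, fun x hx => ?_⟩
  · by_cases hx : x ∈ V
    · exact hχ.contDiffAt.mul (hf.contDiffAt (hV.mem_nhds hx))
    · have hz : (fun x => χ x * f x) =ᶠ[nhds x] fun _ => 0 := by
        filter_upwards [h0.filter_mono (nhds_le_nhdsSet hx)] with y hy
        rw [hy, zero_mul]
      exact contDiffAt_const.congr_of_eventuallyEq hz
  · have := h1.self_of_nhdsSet x hx
    simp [this]

theorem pd_eq {O : Set (ℝ × ℝ)} (hO : IsOpen O) {v f : ℝ × ℝ → ℝ} (h : Set.EqOn v f O)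
    {q : ℝ × ℝ} (hq : q ∈ O) : pdx v q = pdx f q ∧ pdy v q = pdy f q := by
  have hm : ∀ᶠ p in nhds q, v p = f p := Filter.eventually_of_mem (hO.mem_nhds hq) h
  constructor
  · have hc : Filter.Tendsto (fun t : ℝ => (t, q.2)) (nhds q.1) (nhds q) :=
      (by fun_prop : Continuous fun t : ℝ => (t, q.2)).tendsto q.1
    exact Filter.EventuallyEq.deriv_eq (hc.eventually hm)
  · have hc : Filter.Tendsto (fun t : ℝ => (q.1, t)) (nhds q.2) (nhds q) :=
      (by fun_prop : Continuous fun t : ℝ => (q.1, t)).tendsto q.2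
    exact Filter.EventuallyEq.deriv_eq (hc.eventually hm)

/-- The weak formulation also holds for test functions that are smooth only near the closed
annulus. -/
theorem weak_of_contDiffOn {s : ℝ} (hs : 0 < s) (hs1 : s < 1) {V : Set (ℝ × ℝ)} (hV : IsOpen V)
    (hVΩ : closure (ann s) ⊆ V) {w m : ℝ × ℝ → ℝ} {c : ℝ}
    (hweak : ∀ v : ℝ × ℝ → ℝ, ContDiff ℝ (⊤ : ℕ∞) v →
      (∫ q in ann s, (pdx w q * pdx v q + pdy w q * pdy v q)) = c * bInt s (fun q => m q * v q))
    {f : ℝ × ℝ → ℝ} (hf : ContDiffOn ℝ (⊤ : ℕ∞) f V) :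
    (∫ q in ann s, (pdx w q * pdx f q + pdy w q * pdy f q)) = c * bInt s (fun q => m q * f q) := by
  obtain ⟨v, hv, hvf⟩ := exists_smooth_extension isClosed_closure hV hVΩ hf
  have hb : bInt s (fun q => m q * v q) = bInt s (fun q => m q * f q) :=
    bInt_congr hs hs1 fun q hq => by simp only [hvf hq]
  rw [← hb, ← hweak v hv]
  refine setIntegral_congr_fun (isOpen_ann s).measurableSet fun q hq => ?_
  obtain ⟨hx, hy⟩ := pd_eq (isOpen_ann s) (hvf.mono subset_closure) hq
  simp only [hx, hy]

/-- if `(σ(ε), u(ε,·))` is a smooth normalized family of weak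
solutions of the weighted Steklov problem on the annulus `Ω_s` with density
`ρ_ε = ρ + ε δρ`, then `σ'(0) = −σ(0) ∫_{∂Ω_s} u(0,·)² δρ`. -/
theorem steklov_eigenvalue_density_derivative
    (s : ℝ) (hs : 0 < s) (hs1 : s < 1)
    (ρ δρ : ℝ × ℝ → ℝ) (W : Set (ℝ × ℝ)) (hW : IsOpen W) (hWb : annBdry s ⊆ W)
    (hρ : ContinuousOn ρ W) (hδρ : ContinuousOn δρ W)
    (σ : ℝ → ℝ) (hσ : DifferentiableAt ℝ σ 0)
    (u : ℝ → ℝ × ℝ → ℝ) (V : Set (ℝ × ℝ)) (hV : IsOpen V)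
    (hVΩ : closure (ann s) ⊆ V)
    (hu : ContDiffOn ℝ (⊤ : ℕ∞) (fun q : ℝ × (ℝ × ℝ) => u q.1 q.2) (Set.univ ×ˢ V))
    (hweak : ∀ ε : ℝ, ∀ v : ℝ × ℝ → ℝ, ContDiff ℝ (⊤ : ℕ∞) v →
      (∫ q in ann s, (pdx (u ε) q * pdx v q + pdy (u ε) q * pdy v q)) =
        σ ε * bInt s (fun q => (ρ q + ε * δρ q) * u ε q * v q))
    (hnorm : ∀ ε : ℝ, bInt s (fun q => (ρ q + ε * δρ q) * (u ε q) ^ 2) = 1) :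
    deriv σ 0 = -(σ 0) * bInt s (fun q => (u 0 q) ^ 2 * δρ q) := by
  have hslice (ε : ℝ) : ContDiffOn ℝ (⊤ : ℕ∞) (u ε) V :=
    hu.comp (contDiff_prodMk_right ε).contDiffOn fun q hq => ⟨trivial, hq⟩
  have hbW : annBdry s ∩ closure (ann s) ⊆ W := Set.inter_subset_left.trans hWb
  have hbV : annBdry s ∩ closure (ann s) ⊆ V := Set.inter_subset_right.trans hVΩ
  have hcu (ε : ℝ) : ContinuousOn (u ε) (annBdry s ∩ closure (ann s)) :=
    (hslice ε).continuousOn.mono hbV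
  have hcρ := hρ.mono hbW
  have hcδ := hδρ.mono hbW
  -- `R` and `D` are the boundary pairings of `u_ε` and `u_0` with weights `ρ` and `δρ`.
  let R : ℝ → ℝ := fun ε => bInt s fun q => ρ q * u ε q * u 0 q
  let D : ℝ → ℝ := fun ε => bInt s fun q => δρ q * u ε q * u 0 q
  have hpair {w : ℝ × ℝ → ℝ} (hw : ContinuousOn w (annBdry s ∩ closure (ann s))) :
      Continuous fun ε => bInt s fun q => w q * u ε q * u 0 q := by
    have hsnd : Set.MapsTo (Prod.snd : ℝ × (ℝ × ℝ) → ℝ × ℝ)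
        (Set.univ ×ˢ (annBdry s ∩ closure (ann s))) (annBdry s ∩ closure (ann s)) :=
      fun q hq => hq.2
    refine continuous_bInt hs hs1 ?_
    exact ((hw.comp continuousOn_snd hsnd).mul
      (hu.continuousOn.mono (Set.prod_mono le_rfl hbV))).mul
      ((hcu 0).comp continuousOn_snd hsnd)
  have hRc : Continuous R := hpair hcρ
  have hDc : Continuous D := hpair hcδ
  have hB (ε : ℝ) : bInt s (fun q => (ρ q + ε * δρ q) * u ε q * u 0 q) = R ε + ε * D ε := by
    refine Eq.trans ?_ (bInt_add_mul hs hs1 ((hcρ.mul (hcu ε)).mul (hcu 0))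
      ((hcδ.mul (hcu ε)).mul (hcu 0)) ε)
    congr 1
    funext q
    simp only [Pi.mul_apply]
    ring
  -- Symmetry of the Dirichlet form compares the problems at `ε` and at `0`.
  have key (ε : ℝ) : σ ε * (R ε + ε * D ε) = σ 0 * R ε := by
    have h1 := weak_of_contDiffOn hs hs1 hV hVΩ (hweak ε) (hslice 0)
    have h2 := weak_of_contDiffOn hs hs1 hV hVΩ (hweak 0) (hslice ε)
    have h3 : bInt s (fun q => (ρ q + 0 * δρ q) * u 0 q * u ε q) = R ε := by
      refine congrArg (bInt s) ?_
      funext q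
      ring
    rw [hB] at h1
    rw [h3] at h2
    rw [← h1, ← h2]
    congr 1
    funext q
    ring
  have hR0 : R 0 = 1 := by
    rw [← hnorm 0]
    refine congrArg (bInt s) ?_
    funext q
    ring
  have hlim1 : Filter.Tendsto (fun ε => slope σ 0 ε * (R ε + ε * D ε)) (nhdsWithin 0 {0}ᶜ)
      (nhds (deriv σ 0)) := by
    have hc : Continuous fun ε => R ε + ε * D ε := by fun_prop
    have ht := hc.tendsto 0
    rw [hR0, zero_mul, add_zero] at ht
    simpa using (hasDerivAt_iff_tendsto_slope.mp hσ.hasDerivAt).mul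
      (ht.mono_left nhdsWithin_le_nhds)
  have hlim2 : Filter.Tendsto (fun ε => slope σ 0 ε * (R ε + ε * D ε)) (nhdsWithin 0 {0}ᶜ)
      (nhds (-(σ 0) * D 0)) := by
    have hc : Continuous fun ε => -(σ 0) * D ε := by fun_prop
    refine ((hc.tendsto 0).mono_left nhdsWithin_le_nhds).congr' ?_
    filter_upwards [self_mem_nhdsWithin] with ε hε
    have hε0 : ε ≠ 0 := hε
    rw [slope_def_field, sub_zero]
    field_simp
    linear_combination -key ε
  have hD0 : D 0 = bInt s (fun q => (u 0 q) ^ 2 * δρ q) := by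
    refine congrArg (bInt s) ?_
    funext q
    ring
  rw [← hD0]
  exact tendsto_nhds_unique hlim1 hlim2
end

section
/- Let S¹ = {x ∈ ℝ² : |x| = 1} be the unit circle equipped with its arc-length measure μ, and let E be a finite-dimensional linear subspace of the space C(S¹, ℝ) of continuous real-valued functions on S¹. If the constant function 1 does not belong to the convex hull of the set {u² : u ∈ E}, then there exists a continuous function δρ : S¹ → ℝ such that ∫_{S¹} δρ dμ > 0 and ∫_{S¹} u²·δρ dμ ≤ 0 for every u ∈ E. -/
/-!
Let `S` be the set of squares of the unit vectors of `E`, and `D` the convex hull of `S ∪ {-1}`.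
All of this lies in the finite-dimensional space spanned by `1` and the products `u v`, so `D` is
compact (`isCompact_convexHull_of_subset_finiteDimensional`). If `0` were in `D`, then either `0`
would be a convex combination of elements of `S`, which is impossible since these have positive
integral, or `1` would be a nonnegative multiple of such a combination; the latter puts `1` in the
convex hull of the squares of `E`, which is a cone. Hence `0 ∉ D`, and the element `d₀` of `D` of
least `L²` norm satisfies `∫ d d₀ > 0` for all `d ∈ D`
(`exists_separating_of_isCompact_convex`). The function `δρ = -d₀` is as required. Working with the
nearest point in place of an abstract Hahn–Banach functional makes `δρ` continuous at once.

The argument uses that the arc-length measure is finite (`isFiniteMeasure_unitCircle`) and has full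
support (`isOpenPosMeasure_unitCircle`).
-/

open MeasureTheory

/-- The unit circle `S¹ ⊂ ℝ²`. -/
noncomputable abbrev unitCircle : Set (EuclideanSpace ℝ (Fin 2)) :=
  Metric.sphere (0 : EuclideanSpace ℝ (Fin 2)) 1

open scoped ENNReal NNReal

/-- Carathéodory's theorem exhibits the convex hull as a continuous image of
`stdSimplex × s ^ (d + 1)`, where `d` is the dimension of `W`. -/
lemma isCompact_convexHull_of_subset_finiteDimensional {V : Type*} [NormedAddCommGroup V]
    [NormedSpace ℝ V] (W : Submodule ℝ V) [FiniteDimensional ℝ W] {s : Set V}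
    (hs : IsCompact s) (hsW : s ⊆ W) : IsCompact (convexHull ℝ s) := by
  rcases s.eq_empty_or_nonempty with rfl | ⟨x₀, hx₀⟩
  · simp
  set n := Module.finrank ℝ W + 1
  have hcomp : IsCompact ((stdSimplex ℝ (Fin n)) ×ˢ (Set.univ.pi fun _ : Fin n => s)) :=
    (isCompact_stdSimplex ℝ (Fin n)).prod (isCompact_univ_pi fun _ => hs)
  have hcont : Continuous fun p : (Fin n → ℝ) × (Fin n → V) => ∑ j, p.1 j • p.2 j := by
    fun_prop
  convert hcomp.image hcont using 1
  apply Set.Subset.antisymm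
  · intro x hx
    obtain ⟨ι, _, z, w, hz, hind, hw, hw1, hx⟩ := eq_pos_convex_span_of_mem_convexHull hx
    have hspan : vectorSpan ℝ (Set.range z) ≤ W := by
      rw [vectorSpan_def, Submodule.span_le]
      rintro _ ⟨a, ha, b, hb, rfl⟩
      exact W.sub_mem (hsW (hz ha)) (hsW (hz hb))
    have hcard : Fintype.card ι ≤ Fintype.card (Fin n) := by
      rw [Fintype.card_fin]
      exact hind.card_le_finrank_succ.trans
        (Nat.succ_le_succ (Submodule.finrank_mono hspan))
    obtain ⟨e⟩ := Function.Embedding.nonempty_of_card_le hcard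
    have hout : ∀ j, j ∉ Set.range e → Function.extend e w 0 j = 0 := fun j hj => by
      rw [Function.extend_apply' _ _ _ (by simpa using hj)]; rfl
    -- Pad the weights by zero and the points by `x₀`.
    refine ⟨(Function.extend e w 0, Function.extend e z fun _ => x₀), ⟨⟨fun j => ?_, ?_⟩, ?_⟩, ?_⟩
    · by_cases hj : j ∈ Set.range e
      · obtain ⟨i, rfl⟩ := hj
        simpa [e.injective.extend_apply] using (hw i).le
      · exact (hout j hj).ge
    · rw [← hw1]
      exact (Fintype.sum_of_injective e e.injective _ _ hout
        fun i => (e.injective.extend_apply _ _ _).symm).symm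
    · intro j _
      by_cases hj : j ∈ Set.range e
      · obtain ⟨i, rfl⟩ := hj
        simpa [e.injective.extend_apply] using hz ⟨i, rfl⟩
      · simpa [Function.extend_apply' _ _ _ (show ¬∃ a, e a = j by simpa using hj)] using hx₀
    · rw [← hx]
      refine (Fintype.sum_of_injective e e.injective _ _ (fun j hj => ?_) fun i => ?_).symm
      · simp [hout j hj]
      · simp [e.injective.extend_apply]
  · rintro _ ⟨⟨w, z⟩, ⟨hw, hz⟩, rfl⟩
    exact (convex_convexHull ℝ s).sum_mem (fun i _ => hw.1 i) hw.2
      fun i _ => subset_convexHull ℝ s (hz i (Set.mem_univ i))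

/-- The circle has finite length, being a Lipschitz image of `[-π, π]`. -/
instance isFiniteMeasure_unitCircle : IsFiniteMeasure (μH[1] : Measure unitCircle) := by
  let f : ℝ → unitCircle := fun t => ⟨!₂[Real.cos t, Real.sin t], by
    simp [EuclideanSpace.norm_eq]⟩
  have hf : LipschitzWith 2 f := by
    refine LipschitzWith.of_dist_le_mul fun a b => ?_
    have hc := sq_le_sq.2 (Real.abs_cos_sub_cos_le a b)
    have hsn := sq_le_sq.2 (Real.abs_sin_sub_sin_le a b)
    rw [Subtype.dist_eq, EuclideanSpace.dist_eq]
    refine Real.sqrt_le_iff.2 ⟨by positivity, ?_⟩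
    simp only [f, Fin.sum_univ_two, Real.dist_eq, sq_abs, mul_pow]
    simp
    nlinarith [sq_nonneg (a - b)]
  have hsurj : f '' Set.Icc (-Real.pi) Real.pi = Set.univ := by
    refine Set.eq_univ_of_forall fun x => ?_
    have hx : (x.1 0) ^ 2 + (x.1 1) ^ 2 = 1 := by
      have h := EuclideanSpace.norm_sq_eq x.1
      rw [mem_sphere_zero_iff_norm.1 x.2] at h
      simpa [Fin.sum_univ_two] using h.symm
    have hz : ‖(⟨x.1 0, x.1 1⟩ : ℂ)‖ = 1 := by
      rw [Complex.norm_def, Complex.normSq_mk, ← sq, ← sq, hx, Real.sqrt_one]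
    refine ⟨Complex.arg ⟨x.1 0, x.1 1⟩,
      ⟨(Complex.neg_pi_lt_arg _).le, Complex.arg_le_pi _⟩, ?_⟩
    have h0 := Complex.norm_mul_cos_arg ⟨x.1 0, x.1 1⟩
    have h1 := Complex.norm_mul_sin_arg ⟨x.1 0, x.1 1⟩
    rw [hz, one_mul] at h0 h1
    ext i
    fin_cases i
    · simpa [f] using h0
    · simpa [f] using h1
  refine ⟨?_⟩
  rw [← hsurj]
  refine ((hf.lipschitzOnWith).hausdorffMeasure_image_le zero_le_one).trans_lt ?_
  rw [hausdorffMeasure_real]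
  exact ENNReal.mul_lt_top (by simp) (by simp)

/-- The `1`-Lipschitz function `dist · x` maps `ball x ε` onto a set containing the interval
`(0, min ε 2)`, because the circle is connected and contains the antipode of `x`. -/
instance isOpenPosMeasure_unitCircle :
    Measure.IsOpenPosMeasure (μH[1] : Measure unitCircle) := by
  refine ⟨fun U hU ⟨x, hx⟩ h0 => ?_⟩
  obtain ⟨ε, hε, hball⟩ := Metric.isOpen_iff.1 hU x hx
  let g : unitCircle → ℝ := fun y => dist y x
  have hg : LipschitzWith 1 g := LipschitzWith.dist_left x
  have : PreconnectedSpace unitCircle :=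
    Subtype.preconnectedSpace (isPreconnected_sphere (by
      rw [← Module.finrank_eq_rank]; simp) _ _)
  have hx1 : ‖x.1‖ = 1 := mem_sphere_zero_iff_norm.1 x.2
  have hIcc : Set.Icc (g x) (g (-x)) ⊆ Set.range g := intermediate_value_univ _ _ hg.continuous
  have hgx : g x = 0 := dist_self x
  have hgnx : g (-x) = 2 := by
    change dist (-x.1) x.1 = 2
    rw [dist_eq_norm, show -x.1 - x.1 = (-2 : ℝ) • x.1 by module, norm_smul, hx1]
    norm_num
  have hsub : Set.Ioo 0 (min ε 2) ⊆ g '' U := fun t ht => by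
    obtain ⟨y, rfl⟩ := hIcc (show t ∈ _ by
      rw [hgx, hgnx]; exact ⟨ht.1.le, (ht.2.trans_le (min_le_right _ _)).le⟩)
    exact ⟨y, hball (ht.2.trans_le (min_le_left _ _)), rfl⟩
  have hle := (measure_mono hsub).trans
    ((hg.lipschitzOnWith (s := U)).hausdorffMeasure_image_le zero_le_one)
  rw [h0, hausdorffMeasure_real, Real.volume_Ioo] at hle
  simp at hle
  linarith

/-- Integration of continuous functions, as a continuous linear functional. -/
noncomputable def integralFunctional {X : Type*} [TopologicalSpace X] [CompactSpace X]
    [MeasurableSpace X] [BorelSpace X] (μ : Measure X) [IsFiniteMeasure μ] : C(X, ℝ) →L[ℝ] ℝ :=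
  LinearMap.mkContinuous
    { toFun := fun f => ∫ x, f x ∂μ
      map_add' := fun f g => integral_add
        (f.continuous.integrable_of_hasCompactSupport (HasCompactSupport.of_compactSpace f))
        (g.continuous.integrable_of_hasCompactSupport (HasCompactSupport.of_compactSpace g))
      map_smul' := fun c f => integral_const_mul c _ }
    (μ.real Set.univ) fun f => by
      rw [mul_comm]
      exact norm_integral_le_of_norm_le_const (Filter.Eventually.of_forall f.norm_coe_le_norm)

lemma integralFunctional_mul_self_pos {X : Type*} [TopologicalSpace X] [CompactSpace X]
    [MeasurableSpace X] [BorelSpace X] (μ : Measure X) [IsFiniteMeasure μ]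
    [μ.IsOpenPosMeasure] {f : C(X, ℝ)} (hf : f ≠ 0) : 0 < integralFunctional μ (f * f) := by
  obtain ⟨x, hx⟩ : ∃ x, f x ≠ 0 := by
    by_contra! h
    exact hf (ContinuousMap.ext h)
  exact Continuous.integral_pos_of_hasCompactSupport_nonneg_nonzero (f * f).continuous
    (HasCompactSupport.of_compactSpace _) (fun y => mul_self_nonneg (f y))
    (x := x) (mul_self_ne_zero.2 hx)

/-- The element `d₀` of least `L²` norm in `D` separates `D` from the origin. -/
lemma exists_separating_of_isCompact_convex {X : Type*} [TopologicalSpace X] [CompactSpace X]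
    [MeasurableSpace X] [BorelSpace X] (μ : Measure X) [IsFiniteMeasure μ]
    [μ.IsOpenPosMeasure] {D : Set C(X, ℝ)} (hcomp : IsCompact D) (hconv : Convex ℝ D)
    (hne : D.Nonempty) (h0 : (0 : C(X, ℝ)) ∉ D) :
    ∃ d₀ : C(X, ℝ), ∀ d ∈ D, 0 < integralFunctional μ (d * d₀) := by
  set L := integralFunctional μ
  obtain ⟨d₀, hd₀, hmin⟩ := hcomp.exists_isMinOn hne
    (show Continuous fun d => L (d * d) by fun_prop).continuousOn
  refine ⟨d₀, fun d hd => ?_⟩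
  have hpos : 0 < L (d₀ * d₀) :=
    integralFunctional_mul_self_pos μ fun h => h0 (h ▸ hd₀)
  by_contra! hle
  have hexp : ∀ t : ℝ, L (((1 - t) • d₀ + t • d) * ((1 - t) • d₀ + t • d)) =
      (1 - t) ^ 2 * L (d₀ * d₀) + 2 * t * (1 - t) * L (d * d₀) + t ^ 2 * L (d * d) := fun t => by
    rw [show ((1 - t) • d₀ + t • d) * ((1 - t) • d₀ + t • d) = (1 - t) ^ 2 • (d₀ * d₀) +
      (2 * t * (1 - t)) • (d * d₀) + t ^ 2 • (d * d) by ext x; simp; ring]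
    simp
  have hdd : L (d₀ * d₀) ≤ L (d * d) := hmin hd
  set a := L (d₀ * d₀)
  set b := L (d * d)
  -- Moving from `d₀` towards `d` by `t = a / (a + b)` strictly decreases the `L²` norm.
  have hab : 0 < a + b := by linarith
  have ht : a / (a + b) ≤ 1 := (div_le_one hab).2 (by linarith)
  have ht0 : 0 < a / (a + b) := by positivity
  have hm : a ≤ _ := hmin (hconv hd₀ hd (sub_nonneg.2 ht) ht0.le (sub_add_cancel _ _))
  simp only [hexp] at hm
  have hta : a / (a + b) * (a + b) = a := div_mul_cancel₀ _ hab.ne'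
  generalize a / (a + b) = t at *
  have hcross : 2 * t * (1 - t) * L (d * d₀) ≤ 0 :=
    mul_nonpos_of_nonneg_of_nonpos (mul_nonneg (by linarith) (by linarith)) hle
  nlinarith [mul_pos ht0 hpos, congrArg (t * ·) hta]

/-- let `E` be a finite-dimensional subspace of `C(S¹, ℝ)`. If
the constant function `1` does not lie in the convex hull of
`{u² : u ∈ E}`, then there is a continuous `δρ : S¹ → ℝ` with
`∫_{S¹} δρ dμ > 0` and `∫_{S¹} u² δρ dμ ≤ 0` for all `u ∈ E`, where `μ` is
the arc-length (one-dimensional Hausdorff) measure on `S¹`. -/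
theorem separation_for_nonattained_unit_sphere_condition
    (E : Submodule ℝ C(unitCircle, ℝ)) (hE : FiniteDimensional ℝ E)
    (h1 : (1 : C(unitCircle, ℝ)) ∉
      convexHull ℝ ((fun u : C(unitCircle, ℝ) => u * u) '' (E : Set C(unitCircle, ℝ)))) :
    ∃ δρ : C(unitCircle, ℝ),
      (0 < ∫ x, δρ x ∂(μH[1] : Measure unitCircle)) ∧
      ∀ u : C(unitCircle, ℝ), u ∈ E →
        (∫ x, (u x) ^ 2 * δρ x ∂(μH[1] : Measure unitCircle)) ≤ 0 := by
  classical
  set μ : Measure unitCircle := μH[1]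
  set L := integralFunctional μ
  set sq : C(unitCircle, ℝ) → C(unitCircle, ℝ) := fun u => u * u
  -- The squares of the unit vectors of `E`.
  let S : Set C(unitCircle, ℝ) := (fun u : E => sq u) '' Metric.sphere (0 : E) 1
  let D := convexHull ℝ (insert (-1) S)
  have hproper : ProperSpace E := FiniteDimensional.proper ℝ E
  have hScomp : IsCompact S := (isCompact_sphere _ _).image (by fun_prop)
  let W : Submodule ℝ C(unitCircle, ℝ) := E * E ⊔ Submodule.span ℝ {1}
  have hEfg : E.FG := Module.Finite.iff_fg.1 hE
  have hW : FiniteDimensional ℝ W :=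
    Module.Finite.iff_fg.2 ((hEfg.mul hEfg).sup (Submodule.fg_span_singleton _))
  have hDcomp : IsCompact D := by
    refine isCompact_convexHull_of_subset_finiteDimensional W (hScomp.insert _) ?_
    refine Set.insert_subset ?_ ?_
    · exact W.neg_mem (Submodule.mem_sup_right (Submodule.mem_span_singleton_self _))
    · rintro _ ⟨u, -, rfl⟩
      exact Submodule.mem_sup_left (Submodule.mul_mem_mul u.2 u.2)
  have hLpos : ∀ c ∈ convexHull ℝ S, 0 < L c := by
    intro c hc
    refine convexHull_min (t := {c | 0 < L c}) ?_ ?_ hc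
    · rintro _ ⟨u, hu, rfl⟩
      refine integralFunctional_mul_self_pos μ fun h => ?_
      have : u = 0 := Subtype.ext h
      simp [this] at hu
    · exact convex_halfSpace_gt L.toLinearMap.isLinear 0
  have hcone : ∀ t : ℝ, 0 ≤ t → ∀ c ∈ convexHull ℝ S,
      t • c ∈ convexHull ℝ (sq '' (E : Set C(unitCircle, ℝ))) := by
    intro t ht c hc
    have := Set.smul_mem_smul_set (a := t) hc
    rw [← convexHull_smul] at this
    refine convexHull_mono ?_ this
    rintro _ ⟨_, ⟨u, -, rfl⟩, rfl⟩
    refine ⟨√t • (u : C(unitCircle, ℝ)), E.smul_mem _ u.2, ?_⟩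
    simp only [sq, smul_mul_smul_comm, Real.mul_self_sqrt ht]
  have h0 : (0 : C(unitCircle, ℝ)) ∉ D := by
    intro h
    rcases S.eq_empty_or_nonempty with hS | hS
    · simp only [D, hS, insert_empty_eq, convexHull_singleton, Set.mem_singleton_iff] at h
      have h10 : (1 : C(unitCircle, ℝ)) = 0 := by
        rw [← neg_neg (1 : C(unitCircle, ℝ)), ← h, neg_zero]
      exact h1 (h10 ▸ subset_convexHull ℝ _ ⟨0, E.zero_mem, mul_zero 0⟩)
    · simp only [D] at h
      rw [convexHull_insert hS, convexJoin_singleton_left] at h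
      simp only [Set.mem_iUnion] at h
      obtain ⟨c, hc, a, b, ha, hb, hab, habc⟩ := h
      have hbc : b • c = a • (1 : C(unitCircle, ℝ)) := by
        rw [smul_neg, neg_add_eq_zero] at habc
        exact habc.symm
      rcases ha.eq_or_lt with rfl | ha
      · have hb1 : b = 1 := by linarith
        have hc0 : c = 0 := by simpa [hb1] using hbc
        simpa [hc0] using hLpos c hc
      · refine h1 ?_
        have := hcone (b / a) (by positivity) c hc
        rwa [div_eq_inv_mul, mul_smul, hbc, inv_smul_smul₀ ha.ne'] at this
  obtain ⟨d₀, hd₀⟩ := exists_separating_of_isCompact_convex μ hDcomp (convex_convexHull ℝ _)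
    ⟨-1, subset_convexHull ℝ _ (Set.mem_insert _ _)⟩ h0
  refine ⟨-d₀, ?_, fun u hu => ?_⟩
  · have := hd₀ (-1) (subset_convexHull ℝ _ (Set.mem_insert _ _))
    rwa [neg_one_mul] at this
  · have hint : ∫ x, (u x) ^ 2 * (-d₀) x ∂μ = -L (u * u * d₀) := by
      rw [← map_neg]
      refine integral_congr_ae (Filter.Eventually.of_forall fun x => ?_)
      change (u x) ^ 2 * -(d₀ x) = -(u x * u x * d₀ x)
      ring
    rw [hint, neg_nonpos]
    rcases eq_or_ne u 0 with rfl | hu0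
    · simp
    have hn : ‖u‖ ≠ 0 := norm_ne_zero_iff.2 hu0
    -- `L (u * u * d₀)` is homogeneous of degree two in `u`, so `u` may be normalized.
    have hmem : sq (‖u‖⁻¹ • u) ∈ S :=
      ⟨⟨‖u‖⁻¹ • u, E.smul_mem _ hu⟩, by simp [norm_smul, hn], rfl⟩
    have hpos := hd₀ _ (subset_convexHull ℝ _ (Set.mem_insert_of_mem _ hmem))
    have heq : u * u * d₀ = ‖u‖ ^ 2 • (sq (‖u‖⁻¹ • u) * d₀) := by
      ext x
      simp [sq]
      field_simp
    rw [heq, map_smul, smul_eq_mul]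
    exact mul_nonneg (sq_nonneg _) hpos.le
end

section
/- Let s ∈ (0,1) satisfy (1 + s)/(1 − s) = (1/2)·log(1/s), let ρ > 0, and set σ := (1/ρ)·(1 − s)/(1 + s). Then σ = 2/(ρ·log(1/s)), and each of the three functions u₁(x) = cosh(log(|x|/√s))·x₁/|x|, u₂(x) = cosh(log(|x|/√s))·x₂/|x|, u₃(x) = log(|x|/√s) is harmonic on the open annulus {x ∈ ℝ² : s < |x| < 1} and satisfies both Steklov boundary conditions ⟨x, ∇u(x)⟩ = σ·ρ·u(x) for |x| = 1 and −(1/s)·⟨x, ∇u(x)⟩ = σ·(ρ/s)·u(x) for |x| = s. Hence at the critical annulus the first Steklov eigenvalue admits (at least) three linearly independent eigenfunctions with common eigenvalue σ, namely the coordinate functions generating the critical catenoid. -/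
/-- The harmonicity and boundary conditions for a Steklov eigenfunction on the annulus
`s ≤ |x| ≤ 1` with densities `ρ` (outer), `ρ/s` (inner) and eigenvalue `σ`. -/
def IsSteklov (s ρ σ : ℝ) (u : ℝ × ℝ → ℝ) : Prop :=
  (∀ p : ℝ × ℝ, s < nrm p → nrm p < 1 → lap u p = 0) ∧
  (∀ p : ℝ × ℝ, nrm p = 1 → p.1 * pdx u p + p.2 * pdy u p = σ * ρ * u p) ∧
  (∀ p : ℝ × ℝ, nrm p = s →
    -(1 / s) * (p.1 * pdx u p + p.2 * pdy u p) = σ * (ρ / s) * u p)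

lemma nrm_swap (p : ℝ × ℝ) : nrm p.swap = nrm p := by
  simp [nrm, add_comm]

lemma IsSteklov.comp_swap {s ρ σ : ℝ} {u v : ℝ × ℝ → ℝ} (h : IsSteklov s ρ σ u)
    (hv : ∀ p, v p = u p.swap) : IsSteklov s ρ σ v := by
  obtain rfl : v = fun p => u p.swap := funext hv
  obtain ⟨h1, h2, h3⟩ := h
  refine ⟨fun p hp hp' => ?_, fun p hp => ?_, fun p hp => ?_⟩
  · have := h1 p.swap (by rwa [nrm_swap]) (by rwa [nrm_swap])
    rw [← this]
    exact add_comm _ _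
  · have := h2 p.swap (by rwa [nrm_swap])
    rw [← this]
    exact add_comm _ _
  · have := h3 p.swap (by rwa [nrm_swap])
    rw [← this]
    exact congrArg _ (add_comm _ _)

lemma nrm_sq (p : ℝ × ℝ) : nrm p ^ 2 = p.1 ^ 2 + p.2 ^ 2 :=
  Real.sq_sqrt (by positivity)

lemma sq_add_sq_ne_zero_of_nrm_pos {p : ℝ × ℝ} (h : 0 < nrm p) : p.1 ^ 2 + p.2 ^ 2 ≠ 0 := by
  rw [← nrm_sq]
  positivity

/-- Away from the origin the Laplacian can be computed from first partial derivatives that are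
known only away from the origin. -/
lemma lap_eq_of_hasDerivAt {u gx gy : ℝ × ℝ → ℝ}
    (hx : ∀ p : ℝ × ℝ, p.1 ^ 2 + p.2 ^ 2 ≠ 0 → pdx u p = gx p)
    (hy : ∀ p : ℝ × ℝ, p.1 ^ 2 + p.2 ^ 2 ≠ 0 → pdy u p = gy p)
    {p : ℝ × ℝ} (hp : p.1 ^ 2 + p.2 ^ 2 ≠ 0) {a b : ℝ}
    (ha : HasDerivAt (fun t => gx (t, p.2)) a p.1)
    (hb : HasDerivAt (fun t => gy (p.1, t)) b p.2) : lap u p = a + b := by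
  have e1 : (fun t => pdx u (t, p.2)) =ᶠ[nhds p.1] fun t => gx (t, p.2) := by
    have hc : ContinuousAt (fun t : ℝ => t ^ 2 + p.2 ^ 2) p.1 := by fun_prop
    filter_upwards [hc.eventually_ne hp] with t ht using hx (t, p.2) ht
  have e2 : (fun t => pdy u (p.1, t)) =ᶠ[nhds p.2] fun t => gy (p.1, t) := by
    have hc : ContinuousAt (fun t : ℝ => p.1 ^ 2 + t ^ 2) p.2 := by fun_prop
    filter_upwards [hc.eventually_ne hp] with t ht using hy (p.1, t) ht
  rw [lap, e1.deriv_eq, e2.deriv_eq, ha.deriv, hb.deriv]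

lemma hasDerivAt_sq_add (c x : ℝ) : HasDerivAt (fun t : ℝ => t ^ 2 + c ^ 2) (2 * x) x := by
  simpa using ((hasDerivAt_id x).pow 2).add_const (c ^ 2)

lemma hasDerivAt_add_sq (c x : ℝ) : HasDerivAt (fun t : ℝ => c ^ 2 + t ^ 2) (2 * x) x := by
  simpa using ((hasDerivAt_id x).pow 2).const_add (c ^ 2)

/-- The closed form of `u₁`; it holds at the origin too, where both sides are `0`. -/
lemma cosh_log_mul_div {s : ℝ} (hs : 0 < s) (p : ℝ × ℝ) :
    Real.cosh (Real.log (nrm p / Real.sqrt s)) * p.1 / nrm p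
      = 1 / (2 * Real.sqrt s) * (p.1 + s * p.1 / (p.1 ^ 2 + p.2 ^ 2)) := by
  rcases (Real.sqrt_nonneg (p.1 ^ 2 + p.2 ^ 2)).eq_or_lt' with h | h
  · have h0 : p.1 = 0 := by
      have := (Real.sqrt_eq_zero (by positivity)).1 h
      nlinarith [sq_nonneg p.1, sq_nonneg p.2]
    simp [h0]
  · change 0 < nrm p at h
    have hr : 0 < Real.sqrt s := Real.sqrt_pos.2 hs
    rw [Real.cosh_log (by positivity), ← nrm_sq]
    nth_rewrite 4 [← Real.sq_sqrt hs.le]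
    field_simp

lemma isSteklov_cosh {s ρ : ℝ} (hs : 0 < s) (hρ : 0 < ρ) {u : ℝ × ℝ → ℝ} {c : ℝ}
    (hu : ∀ p, u p = c * (p.1 + s * p.1 / (p.1 ^ 2 + p.2 ^ 2))) :
    IsSteklov s ρ ((1 / ρ) * (1 - s) / (1 + s)) u := by
  obtain rfl := funext hu
  have hx : ∀ p : ℝ × ℝ, p.1 ^ 2 + p.2 ^ 2 ≠ 0 →
      pdx (fun p => c * (p.1 + s * p.1 / (p.1 ^ 2 + p.2 ^ 2))) p
        = c * (1 + s * (p.2 ^ 2 - p.1 ^ 2) / (p.1 ^ 2 + p.2 ^ 2) ^ 2) := by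
    intro p hp
    have := (((hasDerivAt_id p.1).add ((((hasDerivAt_id p.1).const_mul s).div
      (hasDerivAt_sq_add p.2 p.1) hp))).const_mul c).deriv
    refine Eq.trans this ?_
    simp only [id]
    field_simp
    ring
  have hy : ∀ p : ℝ × ℝ, p.1 ^ 2 + p.2 ^ 2 ≠ 0 →
      pdy (fun p => c * (p.1 + s * p.1 / (p.1 ^ 2 + p.2 ^ 2))) p
        = c * (-2 * s * p.1 * p.2 / (p.1 ^ 2 + p.2 ^ 2) ^ 2) := by
    intro p hp
    have := (((hasDerivAt_const p.2 p.1).add (((hasDerivAt_const p.2 (s * p.1)).div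
      (hasDerivAt_add_sq p.1 p.2) hp))).const_mul c).deriv
    refine Eq.trans this ?_
    field_simp
    ring
  refine ⟨fun p hp _ => ?_, fun p hp => ?_, fun p hp => ?_⟩
  · have hq := sq_add_sq_ne_zero_of_nrm_pos (hs.trans hp)
    have ha := ((((((hasDerivAt_id p.1).pow 2).const_sub (p.2 ^ 2)).const_mul s).div
      ((hasDerivAt_sq_add p.2 p.1).pow 2) (pow_ne_zero 2 hq)).const_add 1).const_mul c
    have hb := (((hasDerivAt_id p.2).const_mul (-2 * s * p.1)).div
      ((hasDerivAt_add_sq p.1 p.2).pow 2) (pow_ne_zero 2 hq)).const_mul c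
    rw [lap_eq_of_hasDerivAt hx hy hq ha hb]
    simp only [id, Pi.pow_apply]
    field_simp
    push_cast
    ring
  · have hq := sq_add_sq_ne_zero_of_nrm_pos (p := p) (by rw [hp]; norm_num)
    have h1 : p.1 ^ 2 + p.2 ^ 2 = 1 := by rw [← nrm_sq, hp]; norm_num
    have h2 : p.2 ^ 2 = 1 - p.1 ^ 2 := by linarith
    rw [hx p hq, hy p hq]
    simp only [h1]
    field_simp
    rw [h2]
    ring
  · have hq := sq_add_sq_ne_zero_of_nrm_pos (p := p) (by rwa [hp])
    have h1 : p.1 ^ 2 + p.2 ^ 2 = s ^ 2 := by rw [← nrm_sq, hp]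
    have h2 : p.2 ^ 2 = s ^ 2 - p.1 ^ 2 := by linarith
    rw [hx p hq, hy p hq]
    simp only [h1]
    field_simp
    rw [h2]
    ring

lemma log_nrm_div {s : ℝ} (hs : 0 < s) {p : ℝ × ℝ} (hp : p.1 ^ 2 + p.2 ^ 2 ≠ 0) :
    Real.log (nrm p / Real.sqrt s)
      = Real.log (p.1 ^ 2 + p.2 ^ 2) / 2 + Real.log (1 / s) / 2 := by
  have h : 0 < p.1 ^ 2 + p.2 ^ 2 := lt_of_le_of_ne (by positivity) hp.symm
  rw [nrm, Real.log_div (Real.sqrt_pos.2 h).ne' (Real.sqrt_pos.2 hs).ne', Real.log_sqrt h.le,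
    Real.log_sqrt hs.le, one_div, Real.log_inv]
  ring

lemma isSteklov_log {s ρ : ℝ} (hs : 0 < s) (hs1 : s < 1) (hρ : 0 < ρ) {u : ℝ × ℝ → ℝ}
    (hu : ∀ p, u p = Real.log (nrm p / Real.sqrt s)) :
    IsSteklov s ρ (2 / (ρ * Real.log (1 / s))) u := by
  have hL : 0 < Real.log (1 / s) := Real.log_pos (by rw [lt_div_iff₀ hs]; linarith)
  have hx : ∀ p : ℝ × ℝ, p.1 ^ 2 + p.2 ^ 2 ≠ 0 → pdx u p = p.1 / (p.1 ^ 2 + p.2 ^ 2) := by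
    intro p hp
    have hd := ((((hasDerivAt_sq_add p.2 p.1).log hp).div_const 2).add_const
      (Real.log (1 / s) / 2))
    have hc : ContinuousAt (fun t : ℝ => t ^ 2 + p.2 ^ 2) p.1 := by fun_prop
    have e := hd.congr_of_eventuallyEq (f₁ := fun t => u (t, p.2)) (by
      filter_upwards [hc.eventually_ne hp] with t ht
      rw [hu]
      exact log_nrm_div hs (p := (t, p.2)) ht)
    refine e.deriv.trans ?_
    field_simp
  have hy : ∀ p : ℝ × ℝ, p.1 ^ 2 + p.2 ^ 2 ≠ 0 → pdy u p = p.2 / (p.1 ^ 2 + p.2 ^ 2) := by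
    intro p hp
    have hd := ((((hasDerivAt_add_sq p.1 p.2).log hp).div_const 2).add_const
      (Real.log (1 / s) / 2))
    have hc : ContinuousAt (fun t : ℝ => p.1 ^ 2 + t ^ 2) p.2 := by fun_prop
    have e := hd.congr_of_eventuallyEq (f₁ := fun t => u (p.1, t)) (by
      filter_upwards [hc.eventually_ne hp] with t ht
      rw [hu]
      exact log_nrm_div hs (p := (p.1, t)) ht)
    refine e.deriv.trans ?_
    field_simp
  have hrad : ∀ p : ℝ × ℝ, p.1 ^ 2 + p.2 ^ 2 ≠ 0 → p.1 * pdx u p + p.2 * pdy u p = 1 := by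
    intro p hp
    rw [hx p hp, hy p hp]
    field_simp
  refine ⟨fun p hp _ => ?_, fun p hp => ?_, fun p hp => ?_⟩
  · have hq := sq_add_sq_ne_zero_of_nrm_pos (hs.trans hp)
    have ha := (hasDerivAt_id p.1).div (hasDerivAt_sq_add p.2 p.1) hq
    have hb := (hasDerivAt_id p.2).div (hasDerivAt_add_sq p.1 p.2) hq
    rw [lap_eq_of_hasDerivAt hx hy hq ha hb]
    simp only [id]
    field_simp
    ring
  · have hq := sq_add_sq_ne_zero_of_nrm_pos (p := p) (by rw [hp]; norm_num)
    have h1 : p.1 ^ 2 + p.2 ^ 2 = 1 := by rw [← nrm_sq, hp]; norm_num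
    rw [hrad p hq, hu, log_nrm_div hs hq, h1, Real.log_one]
    field_simp
    ring
  · have hq := sq_add_sq_ne_zero_of_nrm_pos (p := p) (by rwa [hp])
    have h1 : p.1 ^ 2 + p.2 ^ 2 = s ^ 2 := by rw [← nrm_sq, hp]
    have h2 : Real.log (s ^ 2) = -2 * Real.log (1 / s) := by
      rw [Real.log_pow, one_div, Real.log_inv]
      push_cast
      ring
    rw [hrad p hq, hu, log_nrm_div hs hq, h1, h2]
    field_simp
    ring

/-- let `s ∈ (0,1)` satisfy `(1+s)/(1−s) = (1/2) log(1/s)`,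
`ρ > 0`, and `σ = (1/ρ)(1−s)/(1+s)`. Then `σ = 2/(ρ log(1/s))`, and each of
`u₁(x) = cosh(log(|x|/√s)) x₁/|x|`, `u₂(x) = cosh(log(|x|/√s)) x₂/|x|`,
`u₃(x) = log(|x|/√s)` is harmonic on the open annulus `{s < |x| < 1}` and
satisfies the Steklov boundary conditions with densities `ρ` (outer) and
`ρ/s` (inner) and eigenvalue `σ`; moreover `u₁, u₂, u₃` are linearly
independent — the coordinate functions generating the critical catenoid. -/
theorem critical_annulus_first_eigenvalue_multiplicity_three
    (s ρ : ℝ) (hs : 0 < s) (hs1 : s < 1)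
    (hcrit : (1 + s) / (1 - s) = (1 / 2) * Real.log (1 / s)) (hρ : 0 < ρ)
    (σ : ℝ) (hσ : σ = (1 / ρ) * (1 - s) / (1 + s))
    (u1 u2 u3 : ℝ × ℝ → ℝ)
    (hu1 : ∀ p : ℝ × ℝ, u1 p = Real.cosh (Real.log (nrm p / Real.sqrt s)) * p.1 / nrm p)
    (hu2 : ∀ p : ℝ × ℝ, u2 p = Real.cosh (Real.log (nrm p / Real.sqrt s)) * p.2 / nrm p)
    (hu3 : ∀ p : ℝ × ℝ, u3 p = Real.log (nrm p / Real.sqrt s)) :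
    σ = 2 / (ρ * Real.log (1 / s)) ∧
    (∀ u ∈ ({u1, u2, u3} : Set (ℝ × ℝ → ℝ)),
      (∀ p : ℝ × ℝ, s < nrm p → nrm p < 1 → lap u p = 0) ∧
      (∀ p : ℝ × ℝ, nrm p = 1 → p.1 * pdx u p + p.2 * pdy u p = σ * ρ * u p) ∧
      (∀ p : ℝ × ℝ, nrm p = s →
        -(1 / s) * (p.1 * pdx u p + p.2 * pdy u p) = σ * (ρ / s) * u p)) ∧
    LinearIndependent ℝ ![u1, u2, u3] := by
  have hL : 0 < Real.log (1 / s) := Real.log_pos (by rw [lt_div_iff₀ hs]; linarith)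
  have hr : 0 < Real.sqrt s := Real.sqrt_pos.2 hs
  have h1s : 0 < 1 - s := by linarith
  have hσ' : σ = 2 / (ρ * Real.log (1 / s)) := by
    have : Real.log (1 / s) = 2 * ((1 + s) / (1 - s)) := by linarith
    rw [hσ, this]
    field_simp
  have S1 : IsSteklov s ρ σ u1 :=
    hσ ▸ isSteklov_cosh hs hρ fun p => (hu1 p).trans (cosh_log_mul_div hs p)
  have S2 : IsSteklov s ρ σ u2 := S1.comp_swap fun p => by
    rw [hu1, hu2, nrm_swap, Prod.fst_swap]
  have S3 : IsSteklov s ρ σ u3 := hσ' ▸ isSteklov_log hs hs1 hρ hu3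
  refine ⟨hσ', ?_, ?_⟩
  · rintro u (rfl | rfl | rfl)
    exacts [S1, S2, S3]
  · rw [Fintype.linearIndependent_iff]
    intro g hg
    have ev : ∀ p, g 0 * u1 p + g 1 * u2 p + g 2 * u3 p = 0 := fun p => by
      simpa [Fin.sum_univ_three] using congrFun hg p
    have na : nrm (Real.sqrt s, 0) = Real.sqrt s := by simp [nrm, Real.sqrt_sq hr.le]
    have nb : nrm (0, Real.sqrt s) = Real.sqrt s := by simp [nrm, Real.sqrt_sq hr.le]
    have g0 : g 0 = 0 := by
      simpa [hu1, hu2, hu3, na, hr.ne'] using ev (Real.sqrt s, 0)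
    have g1 : g 1 = 0 := by
      simpa [hu1, hu2, hu3, nb, hr.ne'] using ev (0, Real.sqrt s)
    have g2 : g 2 = 0 := by
      have h := ev (1, 0)
      rw [g0, g1, hu3, log_nrm_div hs (by norm_num)] at h
      have : g 2 * Real.log (1 / s) = 0 := by
        norm_num at h ⊢
        exact h
      exact (mul_eq_zero.1 this).resolve_right hL.ne'
    intro i
    fin_cases i
    exacts [g0, g1, g2]
end
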